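/- Let $n \geq 2$, let $\alpha_1,\dots,\alpha_n$ and $m \geq 3$ be integers with $\alpha_j \geq 3$, let $1 \leq p < \infty$, and let $f$ be a Schwartz function on $\mathbb{R}^n$. Suppose there is a constant $A$ such that $\int_{\mathbb{S}^{n-1}} |T_{\alpha,m}g(x)|^2\, d\sigma(x) \leq A^2 \|g\|_{L^p(\mathbb{R}^n)}^2$ for all Schwartz functions $g$ (and hence, by density and continuity, for all bounded compactly supported measurable $g$). Then there is a constant $A'$ such that for all sufficiently small $\delta \in (0,1/2)$ and all bounded compactly supported measurable $g$, $\int_{\{x \in \mathbb{R}^n:\, 1 - \delta^2 \leq |x| \leq 1 + \delta^2\}} |T_{\alpha,m}g(x)|^2\, dx \leq A'\, \delta^2\, \|g\|_{L^p(\mathbb{R}^n)}^2$. -/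

import Mathlib

open MeasureTheory
open scoped ENNReal

/-- The oscillatory integral operator
`T_{α,m} g (x) = ∫ e^{i (x₁^{α₁} y₁^m + ⋯ + xₙ^{αₙ} yₙ^m)} g(y) dy`. -/
noncomputable def oscOp {n : ℕ} (α : Fin n → ℕ) (m : ℕ)
    (g : EuclideanSpace ℝ (Fin n) → ℂ) (x : EuclideanSpace ℝ (Fin n)) : ℂ :=
  ∫ y : EuclideanSpace ℝ (Fin n),
    Complex.exp (Complex.I * Complex.ofReal (∑ j, (x j) ^ (α j) * (y j) ^ m)) * g y

lemma osc_bound {n : ℕ} (α : Fin n → ℕ) (m : ℕ) (x y : EuclideanSpace ℝ (Fin n)) (z : ℂ) :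
    ‖Complex.exp (Complex.I * Complex.ofReal (∑ j, (x j) ^ (α j) * (y j) ^ m)) * z‖ = ‖z‖ := by
  rw [norm_mul, mul_comm Complex.I, Complex.norm_exp_ofReal_mul_I, one_mul]

lemma osc_kernel_cont {n : ℕ} (α : Fin n → ℕ) (m : ℕ) :
    Continuous (fun q : EuclideanSpace ℝ (Fin n) × EuclideanSpace ℝ (Fin n) =>
      Complex.exp (Complex.I * Complex.ofReal (∑ j, (q.1 j) ^ (α j) * (q.2 j) ^ m))) := by
  fun_prop

lemma osc_cont {n : ℕ} (α : Fin n → ℕ) (m : ℕ) {g : EuclideanSpace ℝ (Fin n) → ℂ}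
    (hg : Integrable g) : Continuous (oscOp α m g) := by
  unfold oscOp
  refine continuous_of_dominated (bound := fun y => ‖g y‖) ?_ ?_ hg.norm ?_
  · intro x
    refine AEStronglyMeasurable.mul ?_ hg.1
    exact ((osc_kernel_cont α m).comp (by fun_prop : Continuous fun y => (x, y))).aestronglyMeasurable
  · intro x
    exact Filter.Eventually.of_forall fun y => (osc_bound α m x y _).le
  · refine Filter.Eventually.of_forall fun y => ?_
    fun_prop

lemma sphere_cover {k : ℕ} (x : EuclideanSpace ℝ (Fin (k+1))) (hx : ‖x‖ = 1) :
    ∃ j : Fin (k+1), ∃ s : Bool, ∃ v ∈ Metric.closedBall (0 : Fin k → ℝ) 1,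
      (‖WithLp.toLp 2 (j.insertNth (if s then (1:ℝ) else -1) v : Fin (k+1) → ℝ)‖)⁻¹ •
        (WithLp.toLp 2 (j.insertNth (if s then (1:ℝ) else -1) v : Fin (k+1) → ℝ)) = x := by
  obtain ⟨j, hj⟩ := Finite.exists_max (fun j => |x j|)
  have hxj : x j ≠ 0 := by
    intro h
    have : x = 0 := by
      ext i
      have := hj i
      simp [h] at this
      simpa using this
    simp [this] at hx
  refine ⟨j, decide (0 < x j), fun i => |x j|⁻¹ * x (j.succAbove i), ?_, ?_⟩
  · rw [mem_closedBall_zero_iff, pi_norm_le_iff_of_nonneg zero_le_one]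
    intro i
    rw [norm_mul, norm_inv, Real.norm_eq_abs, Real.norm_eq_abs, abs_abs]
    rw [inv_mul_le_iff₀ (by positivity), mul_one]
    exact hj _
  · have : (WithLp.toLp 2 (j.insertNth (if decide (0 < x j) then (1:ℝ) else -1)
        (fun i => |x j|⁻¹ * x (j.succAbove i)) : Fin (k+1) → ℝ)) = |x j|⁻¹ • x := by
      ext i
      refine Fin.succAboveCases j ?_ (fun i => ?_) i
      · rcases lt_or_gt_of_ne hxj with h | h
        · simp [abs_of_neg h, not_lt.2 h.le, hxj, inv_neg]
        · simp [h, abs_of_pos h, hxj]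
      · simp
    rw [this, norm_smul, hx, smul_smul]
    simp [hxj]

lemma sphere_finite {n : ℕ} (hn : 2 ≤ n) :
    μH[(n : ℝ) - 1] (Metric.sphere (0 : EuclideanSpace ℝ (Fin n)) 1) < ∞ := by
  obtain ⟨k, rfl⟩ : ∃ k, n = k + 1 := ⟨n - 1, by omega⟩
  have hk : ((k + 1 : ℕ) : ℝ) - 1 = (k : ℝ) := by push_cast; ring
  rw [hk]
  let F : Fin (k+1) → Bool → (Fin k → ℝ) → EuclideanSpace ℝ (Fin (k+1)) := fun j s v =>
      (‖WithLp.toLp 2 (j.insertNth (if s then (1:ℝ) else -1) v : Fin (k+1) → ℝ)‖)⁻¹ •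
        (WithLp.toLp 2 (j.insertNth (if s then (1:ℝ) else -1) v : Fin (k+1) → ℝ))
  have hsub : Metric.sphere (0 : EuclideanSpace ℝ (Fin (k+1))) 1 ⊆
      ⋃ j, ⋃ s, F j s '' (Metric.closedBall 0 1) := by
    intro x hx
    obtain ⟨j, s, v, hv, h⟩ := sphere_cover x (by simpa using hx)
    simp only [Set.mem_iUnion]
    exact ⟨j, s, v, hv, h⟩
  refine (measure_mono hsub).trans_lt ?_
  refine (measure_iUnion_le _).trans_lt ?_
  rw [tsum_fintype]
  refine ENNReal.sum_lt_top.2 fun j _ => ?_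
  refine (measure_iUnion_le _).trans_lt ?_
  rw [tsum_fintype]
  refine ENNReal.sum_lt_top.2 fun s _ => ?_
  have hw : ContDiff ℝ 1 (fun v : Fin k → ℝ => (WithLp.toLp 2
      (j.insertNth (if s then (1:ℝ) else -1) v : Fin (k+1) → ℝ) :
        EuclideanSpace ℝ (Fin (k+1)))) := by
    rw [contDiff_euclidean]
    intro i
    refine Fin.succAboveCases j ?_ (fun i => ?_) i
    · simp only [Fin.insertNth_apply_same]
      fun_prop
    · simp only [Fin.insertNth_apply_succAbove]
      fun_prop
  have hne : ∀ v : Fin k → ℝ, (WithLp.toLp 2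
      (j.insertNth (if s then (1:ℝ) else -1) v : Fin (k+1) → ℝ) :
        EuclideanSpace ℝ (Fin (k+1))) ≠ 0 := by
    intro v h
    have := congrArg (fun w : EuclideanSpace ℝ (Fin (k+1)) => w j) h
    cases s <;> simp at this
  have hF : ContDiff ℝ 1 (F j s) := by
    exact ((hw.norm ℝ hne).inv (fun v => norm_ne_zero_iff.2 (hne v))).smul hw
  obtain ⟨K, hK⟩ := hF.contDiffOn.exists_lipschitzOnWith (s := Metric.closedBall 0 1) one_ne_zero
    (convex_closedBall _ _) (isCompact_closedBall _ _)
  refine (hK.hausdorffMeasure_image_le (d := k) (by positivity)).trans_lt ?_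
  refine ENNReal.mul_lt_top (by simp) ?_
  have := hausdorffMeasure_pi_real (ι := Fin k)
  rw [Fintype.card_fin] at this
  rw [this]
  exact (isCompact_closedBall _ _).measure_lt_top

open scoped Pointwise in
lemma cone_bound {n : ℕ} (hn : 2 ≤ n) (w : EuclideanSpace ℝ (Fin n)) (hw : ‖w‖ = 1)
    (d : ℝ) (hd : 0 < d) (hd1 : d ≤ 1) (s : Set (EuclideanSpace ℝ (Fin n)))
    (hs : s ⊆ Metric.closedBall w d) :
    volume (Set.Ioo (0 : ℝ) 1 • s) ≤
      (2 ^ (n + 1) * volume (Metric.ball (0 : EuclideanSpace ℝ (Fin n)) 1)) *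
        ENNReal.ofReal d ^ (n - 1) := by
  have : Nontrivial (EuclideanSpace ℝ (Fin n)) := by
    refine ⟨w, 0, ?_⟩
    rintro rfl
    simp at hw
  set N : ℕ := ⌊1 / d⌋₊ + 1 with hN
  have hNd : (N : ℝ) * d ≤ 2 := by
    have h1 : (⌊1 / d⌋₊ : ℝ) ≤ 1 / d := Nat.floor_le (by positivity)
    have h2 : (N : ℝ) ≤ 1 / d + 1 := by rw [hN]; push_cast; linarith
    calc (N : ℝ) * d ≤ (1 / d + 1) * d := by gcongr
      _ = 1 + d := by field_simp
      _ ≤ 2 := by linarith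
  have hcov : Set.Ioo (0 : ℝ) 1 • s ⊆
      ⋃ i ∈ Finset.range N, Metric.closedBall (((i : ℝ) * d) • w) (2 * d) := by
    rintro _ ⟨t, ht, x, hx, rfl⟩
    simp only [Set.mem_iUnion]
    refine ⟨⌊t / d⌋₊, ?_, ?_⟩
    · rw [Finset.mem_range, hN, Nat.lt_succ_iff]
      exact Nat.floor_le_floor (by gcongr; exact ht.2.le)
    · have h1 : (⌊t / d⌋₊ : ℝ) ≤ t / d := Nat.floor_le (div_nonneg ht.1.le hd.le)
      have h2 : t / d < (⌊t / d⌋₊ : ℝ) + 1 := Nat.lt_floor_add_one _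
      rw [le_div_iff₀ hd] at h1
      rw [div_lt_iff₀ hd] at h2
      have hxw : ‖x - w‖ ≤ d := by simpa [dist_eq_norm] using hs hx
      rw [Metric.mem_closedBall, dist_eq_norm]
      have : (t • x - ((⌊t / d⌋₊ : ℝ) * d) • w) =
        t • (x - w) + (t - (⌊t / d⌋₊ : ℝ) * d) • w := by module
      show ‖t • x - ((⌊t / d⌋₊ : ℝ) * d) • w‖ ≤ 2 * d
      rw [this]
      refine (norm_add_le _ _).trans ?_
      rw [norm_smul, norm_smul, hw, Real.norm_eq_abs, Real.norm_eq_abs, abs_of_pos ht.1,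
        abs_of_nonneg (by linarith)]
      nlinarith [ht.1, ht.2, norm_nonneg (x - w)]
  calc volume (Set.Ioo (0 : ℝ) 1 • s) ≤ _ := measure_mono hcov
    _ ≤ ∑ i ∈ Finset.range N, volume (Metric.closedBall (((i : ℝ) * d) • w) (2 * d)) :=
      measure_biUnion_finset_le _ _
    _ = ENNReal.ofReal (N * (2 * d) ^ n) * volume (Metric.ball (0 : EuclideanSpace ℝ (Fin n)) 1) := by
      have : ∀ x : EuclideanSpace ℝ (Fin n), volume (Metric.closedBall x (2 * d)) =
          ENNReal.ofReal ((2 * d) ^ n) * volume (Metric.ball (0 : EuclideanSpace ℝ (Fin n)) 1) := by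
        intro x
        rw [Measure.addHaar_closedBall _ _ (by positivity)]
        simp
      simp only [this, Finset.sum_const, Finset.card_range, nsmul_eq_mul]
      rw [ENNReal.ofReal_mul (by positivity), ENNReal.ofReal_natCast, mul_assoc]
    _ ≤ ENNReal.ofReal (2 ^ (n + 1) * d ^ (n - 1)) *
        volume (Metric.ball (0 : EuclideanSpace ℝ (Fin n)) 1) := by
      gcongr ENNReal.ofReal ?_ * _
      obtain ⟨k, rfl⟩ : ∃ k, n = k + 1 := ⟨n - 1, by omega⟩
      have : (N : ℝ) * (2 * d) ^ (k + 1) = (N * d) * (2 ^ (k + 1) * d ^ k) := by ring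
      rw [this, Nat.add_sub_cancel]
      calc _ ≤ 2 * (2 ^ (k + 1) * d ^ k) := by gcongr
        _ = _ := by ring
    _ = _ := by
      rw [ENNReal.ofReal_mul (by positivity), ENNReal.ofReal_pow hd.le, ENNReal.ofReal_pow (by norm_num)]
      norm_num
      ring

lemma toSphere_le {n : ℕ} (hn : 2 ≤ n) : ∃ C : ℝ≥0∞, C ≠ 0 ∧ C ≠ ∞ ∧
    (volume : Measure (EuclideanSpace ℝ (Fin n))).toSphere ≤ C • μH[(n : ℝ) - 1] := by
  set C₀ : ℝ≥0∞ := n * (2 ^ (n + 1) * volume (Metric.ball (0 : EuclideanSpace ℝ (Fin n)) 1))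
    with hC₀
  have hC0 : C₀ ≠ 0 := by
    have : volume (Metric.ball (0 : EuclideanSpace ℝ (Fin n)) 1) ≠ 0 :=
      (Metric.measure_ball_pos _ _ one_pos).ne'
    have : n ≠ 0 := by omega
    simp [hC₀, *]
  have hCt : C₀ ≠ ∞ := by
    refine ENNReal.mul_ne_top (by simp) (ENNReal.mul_ne_top (by simp) ?_)
    exact measure_ball_lt_top.ne
  have key : ∀ (s : Set (Metric.sphere (0 : EuclideanSpace ℝ (Fin n)) 1)) (d : ℝ), 0 < d → d ≤ 1 →
      Metric.ediam s ≤ ENNReal.ofReal d →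
      (volume : Measure (EuclideanSpace ℝ (Fin n))).toSphere s ≤ C₀ * ENNReal.ofReal d ^ (n - 1) := by
    intro s d hd hd1 hs
    rcases s.eq_empty_or_nonempty with rfl | ⟨w, hw⟩
    · simp
    have hsub : s ⊆ Metric.closedBall w d := by
      intro x hx
      have := (Metric.edist_le_ediam_of_mem hx hw).trans hs
      rw [edist_le_ofReal hd.le] at this
      exact this
    refine (measure_mono hsub).trans ?_
    rw [Measure.toSphere_apply' _ Metric.isClosed_closedBall.measurableSet, hC₀, mul_assoc]
    simp only [finrank_euclideanSpace, Fintype.card_fin]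
    gcongr
    refine cone_bound hn w (by simpa using w.2) d hd hd1 _ ?_
    rintro _ ⟨x, hx, rfl⟩
    exact hx
  refine ⟨C₀, hC0, hCt, ?_⟩
  have h2 : C₀⁻¹ • (volume : Measure (EuclideanSpace ℝ (Fin n))).toSphere ≤ μH[(n : ℝ) - 1] := by
    refine Measure.le_hausdorffMeasure _ _ (ENNReal.ofReal (1/2)) (by simp) fun s hs => ?_
    rw [Measure.smul_apply, smul_eq_mul, mul_comm, ← div_eq_mul_inv]
    refine ENNReal.div_le_of_le_mul' ?_
    have hfin : Metric.ediam s ≠ ∞ := (hs.trans_lt ENNReal.ofReal_lt_top).ne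
    set D := (Metric.ediam s).toReal with hD
    have hDe : Metric.ediam s = ENNReal.ofReal D := (ENNReal.ofReal_toReal hfin).symm
    have hexp : (n : ℝ) - 1 = ((n - 1 : ℕ) : ℝ) := by
      rw [Nat.cast_sub (by omega)]; simp
    rw [hexp, ENNReal.rpow_natCast, hDe]
    have hD12 : D ≤ 1 / 2 := by
      rw [hDe] at hs
      exact (ENNReal.ofReal_le_ofReal_iff (by norm_num)).1 hs
    have hD0 : 0 ≤ D := ENNReal.toReal_nonneg
    have hlim : Filter.Tendsto (fun e : ℝ => C₀ * ENNReal.ofReal (D + e) ^ (n - 1))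
        (nhdsWithin 0 (Set.Ioi 0)) (nhds (C₀ * ENNReal.ofReal D ^ (n - 1))) := by
      have hc : Continuous (fun e : ℝ => C₀ * ENNReal.ofReal (D + e) ^ (n - 1)) := by
        refine (ENNReal.continuous_const_mul hCt).comp ?_
        refine (ENNReal.continuous_pow _).comp ?_
        exact ENNReal.continuous_ofReal.comp (by fun_prop)
      have := (hc.tendsto 0).mono_left (nhdsWithin_le_nhds (s := Set.Ioi 0))
      simpa using this
    refine ge_of_tendsto hlim ?_
    have : Set.Ioo (0:ℝ) (1/2) ∈ nhdsWithin (0:ℝ) (Set.Ioi 0) := Ioo_mem_nhdsGT (by norm_num)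
    filter_upwards [this] with e he
    refine key s (D + e) (by linarith [he.1]) (by linarith [he.2]) ?_
    rw [hDe]
    exact ENNReal.ofReal_le_ofReal (by linarith [he.1])
  intro s
  have := h2 s
  rw [Measure.smul_apply, smul_eq_mul] at this ⊢
  rwa [← ENNReal.inv_mul_le_iff hC0 hCt]

open scoped Convolution in
lemma exists_approx {n : ℕ} (g : EuclideanSpace ℝ (Fin n) → ℂ) (hg : Measurable g)
    (M : ℝ) (hM : ∀ y, ‖g y‖ ≤ M) (hc : HasCompactSupport g) :
    ∃ h : ℕ → SchwartzMap (EuclideanSpace ℝ (Fin n)) ℂ, ∃ R : ℝ,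
      (∀ i y, ‖h i y‖ ≤ (Metric.closedBall (0 : EuclideanSpace ℝ (Fin n)) R).indicator
        (fun _ => M) y) ∧
      ∀ᵐ y, Filter.Tendsto (fun i => h i y) Filter.atTop (nhds (g y)) := by
  have hM0 : 0 ≤ M := (norm_nonneg _).trans (hM 0)
  have hgi : Integrable g := by
    have : IntegrableOn g (tsupport g) :=
      Measure.integrableOn_of_bounded (M := M) hc.measure_lt_top.ne hg.aestronglyMeasurable
        (Filter.Eventually.of_forall hM)
    exact (integrableOn_iff_integrable_of_support_subset (subset_tsupport g)).1 this
  obtain ⟨R, hR⟩ := hc.isCompact.isBounded.subset_closedBall (0 : EuclideanSpace ℝ (Fin n))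
  let φ : ℕ → ContDiffBump (0 : EuclideanSpace ℝ (Fin n)) := fun i =>
    { rIn := 1 / (2 * ((i : ℝ) + 1))
      rOut := 1 / ((i : ℝ) + 1)
      rIn_pos := by positivity
      rIn_lt_rOut := by
        apply one_div_lt_one_div_of_lt <;> linarith [(Nat.cast_nonneg i : (0:ℝ) ≤ i)] }
  have hφ1 : ∀ i, (φ i).rOut ≤ 1 := fun i => by
    show 1 / ((i : ℝ) + 1) ≤ 1
    rw [div_le_one (by positivity)]
    linarith [(Nat.cast_nonneg i : (0:ℝ) ≤ i)]
  let H : ℕ → EuclideanSpace ℝ (Fin n) → ℂ := fun i =>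
    ((φ i).normed volume ⋆[ContinuousLinearMap.lsmul ℝ ℝ, volume] g)
  have hHs : ∀ i, ContDiff ℝ (⊤ : ℕ∞) (H i) := fun i =>
    (φ i).hasCompactSupport_normed.contDiff_convolution_left _ (φ i).contDiff_normed
      hgi.locallyIntegrable
  have hHc : ∀ i, HasCompactSupport (H i) := fun i =>
    (φ i).hasCompactSupport_normed.convolution _ hc
  refine ⟨fun i => (hHc i).toSchwartzMap (hHs i), R + 1, ?_, ?_⟩
  · intro i y
    show ‖H i y‖ ≤ _
    have hb : ‖H i y‖ ≤ M := by
      have : ∫ t, (φ i).normed volume t * M = M := by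
        rw [integral_mul_const, (φ i).integral_normed, one_mul]
      rw [← this]
      refine norm_integral_le_of_norm_le ((φ i).integrable_normed.mul_const M) ?_
      refine Filter.Eventually.of_forall fun t => ?_
      simp only [ContinuousLinearMap.lsmul_apply, norm_smul]
      rw [Real.norm_of_nonneg ((φ i).nonneg_normed t)]
      exact mul_le_mul_of_nonneg_left (hM _) ((φ i).nonneg_normed t)
    by_cases hy : y ∈ Metric.closedBall (0 : EuclideanSpace ℝ (Fin n)) (R + 1)
    · rwa [Set.indicator_of_mem hy]
    · rw [Set.indicator_of_notMem hy]
      have : H i y = 0 := by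
        refine integral_eq_zero_of_ae (Filter.Eventually.of_forall fun t => ?_)
        simp only [ContinuousLinearMap.lsmul_apply, Pi.zero_apply, smul_eq_zero]
        by_contra! hcon
        have h1 : t ∈ Metric.ball (0 : EuclideanSpace ℝ (Fin n)) (φ i).rOut := by
          rw [← (φ i).support_normed_eq (μ := volume)]
          exact hcon.1
        have h2 := hR (subset_tsupport g hcon.2)
        rw [mem_closedBall_zero_iff] at h2 hy
        rw [mem_ball_zero_iff] at h1
        have := norm_add_le (y - t) t
        rw [sub_add_cancel] at this
        linarith [hφ1 i]
      simp [this]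
  · refine ContDiffBump.ae_convolution_tendsto_right_of_locallyIntegrable (φ := φ)
      (l := Filter.atTop) (K := 2) ?_ ?_ hgi.locallyIntegrable
    · exact tendsto_one_div_add_atTop_nhds_zero_nat
    · refine Filter.Eventually.of_forall fun i => ?_
      show 1 / ((i : ℝ) + 1) ≤ 2 * (1 / (2 * ((i : ℝ) + 1)))
      apply le_of_eq
      field_simp

lemma osc_schwartz {n : ℕ} (hn : 2 ≤ n) (α : Fin n → ℕ) (m : ℕ) (p A : ℝ) (hp : 1 ≤ p)
    (h : SchwartzMap (EuclideanSpace ℝ (Fin n)) ℂ)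
    (hA : ∫ x in Metric.sphere (0 : EuclideanSpace ℝ (Fin n)) 1,
          ‖oscOp α m (⇑h) x‖ ^ 2 ∂(μH[(n : ℝ) - 1])
        ≤ A ^ 2 * (eLpNorm (⇑h) (ENNReal.ofReal p) volume).toReal ^ 2) :
    ∫⁻ x in Metric.sphere (0 : EuclideanSpace ℝ (Fin n)) 1,
        ‖oscOp α m (⇑h) x‖ₑ ^ 2 ∂(μH[(n : ℝ) - 1])
      ≤ ENNReal.ofReal (A ^ 2) * (eLpNorm (⇑h) (ENNReal.ofReal p) volume) ^ 2 := by
  have hcont := osc_cont α m h.integrable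
  have hint : IntegrableOn (fun x => ‖oscOp α m (⇑h) x‖ ^ 2)
      (Metric.sphere (0 : EuclideanSpace ℝ (Fin n)) 1) (μH[(n : ℝ) - 1]) := by
    obtain ⟨B, hB⟩ := (isCompact_sphere (0 : EuclideanSpace ℝ (Fin n)) 1).exists_bound_of_continuousOn
      (f := fun x => ‖oscOp α m (⇑h) x‖ ^ 2) (by fun_prop)
    refine Measure.integrableOn_of_bounded (M := B) (sphere_finite hn).ne
      (by fun_prop : Continuous (fun x => ‖oscOp α m (⇑h) x‖ ^ 2)).aestronglyMeasurable ?_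
    exact (ae_restrict_iff' Metric.isClosed_sphere.measurableSet).2 (Filter.Eventually.of_forall hB)
  have h1 := ofReal_integral_eq_lintegral_ofReal hint
    (Filter.Eventually.of_forall fun x => by positivity)
  have h2 : ∀ x, ENNReal.ofReal (‖oscOp α m (⇑h) x‖ ^ 2) = ‖oscOp α m (⇑h) x‖ₑ ^ 2 := by
    intro x
    rw [ENNReal.ofReal_pow (norm_nonneg _), ofReal_norm]
  simp only [h2] at h1
  rw [← h1]
  refine (ENNReal.ofReal_le_ofReal hA).trans ?_
  rw [ENNReal.ofReal_mul (by positivity), ENNReal.ofReal_pow ENNReal.toReal_nonneg,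
    ENNReal.ofReal_toReal (h.eLpNorm_lt_top _ _).ne]

lemma osc_ext {n : ℕ} (hn : 2 ≤ n) (α : Fin n → ℕ) (m : ℕ) (p A : ℝ) (hp : 1 ≤ p)
    (hA : ∀ g : SchwartzMap (EuclideanSpace ℝ (Fin n)) ℂ,
      ∫ x in Metric.sphere (0 : EuclideanSpace ℝ (Fin n)) 1,
          ‖oscOp α m (⇑g) x‖ ^ 2 ∂(μH[(n : ℝ) - 1])
        ≤ A ^ 2 * (eLpNorm (⇑g) (ENNReal.ofReal p) volume).toReal ^ 2)
    (g : EuclideanSpace ℝ (Fin n) → ℂ) (hg : Measurable g)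
    (M : ℝ) (hM : ∀ y, ‖g y‖ ≤ M) (hc : HasCompactSupport g) :
    ∫⁻ x in Metric.sphere (0 : EuclideanSpace ℝ (Fin n)) 1,
        ‖oscOp α m g x‖ₑ ^ 2 ∂(μH[(n : ℝ) - 1])
      ≤ ENNReal.ofReal (A ^ 2) * (eLpNorm g (ENNReal.ofReal p) volume) ^ 2 := by
  obtain ⟨h, R, hb, hlim⟩ := exists_approx g hg M hM hc
  have hM0 : 0 ≤ M := (norm_nonneg _).trans (hM 0)
  set F : EuclideanSpace ℝ (Fin n) → ℝ :=
    (Metric.closedBall (0 : EuclideanSpace ℝ (Fin n)) R).indicator (fun _ => M) with hF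
  have hFi : Integrable F := by
    rw [hF, integrable_indicator_iff Metric.isClosed_closedBall.measurableSet]
    exact integrableOn_const measure_closedBall_lt_top.ne
  have hT : ∀ x, Filter.Tendsto (fun i => oscOp α m (h i) x) Filter.atTop (nhds (oscOp α m g x)) := by
    intro x
    refine tendsto_integral_of_dominated_convergence F ?_ hFi ?_ ?_
    · intro i
      exact (((osc_kernel_cont α m).comp (by fun_prop : Continuous fun y => (x, y))).mul
        (h i).continuous).aestronglyMeasurable
    · intro i
      exact Filter.Eventually.of_forall fun y => by rw [osc_bound]; exact hb i y
    · filter_upwards [hlim] with y hy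
      exact hy.const_mul _
  have hp0 : 0 < p := by linarith
  have hpr : (ENNReal.ofReal p).toReal = p := ENNReal.toReal_ofReal hp0.le
  have hL : Filter.Tendsto (fun i => eLpNorm (h i) (ENNReal.ofReal p) volume) Filter.atTop
      (nhds (eLpNorm g (ENNReal.ofReal p) volume)) := by
    have e : ∀ f : EuclideanSpace ℝ (Fin n) → ℂ, eLpNorm f (ENNReal.ofReal p) volume =
        (∫⁻ y, ‖f y‖ₑ ^ p) ^ (1 / p) := by
      intro f
      rw [eLpNorm_eq_lintegral_rpow_enorm_toReal (by simpa using hp0) ENNReal.ofReal_ne_top, hpr]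
    simp only [e]
    refine (ENNReal.continuous_rpow_const.tendsto _).comp ?_
    refine tendsto_lintegral_of_dominated_convergence (fun y =>
      (Metric.closedBall (0 : EuclideanSpace ℝ (Fin n)) R).indicator
        (fun _ => ENNReal.ofReal M ^ p) y) ?_ ?_ ?_ ?_
    · intro i
      exact ((h i).continuous.measurable.enorm.pow_const p)
    · intro i
      refine Filter.Eventually.of_forall fun y => ?_
      have := hb i y
      by_cases hy : y ∈ Metric.closedBall (0 : EuclideanSpace ℝ (Fin n)) R
      · rw [hF, Set.indicator_of_mem hy] at this
        simp only [Set.indicator_of_mem hy]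
        gcongr
        rw [← ofReal_norm]
        exact ENNReal.ofReal_le_ofReal this
      · rw [hF, Set.indicator_of_notMem hy] at this
        have h0 : h i y = 0 := norm_le_zero_iff.1 this
        simp [h0, hp0]
    · rw [lintegral_indicator Metric.isClosed_closedBall.measurableSet, setLIntegral_const]
      refine ENNReal.mul_ne_top (by simp [hp0.le]) measure_closedBall_lt_top.ne
    · filter_upwards [hlim] with y hy
      exact (ENNReal.continuous_rpow_const.tendsto _).comp hy.enorm
  have hR : Filter.Tendsto (fun i => ENNReal.ofReal (A ^ 2) *
      (eLpNorm (h i) (ENNReal.ofReal p) volume) ^ 2) Filter.atTop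
      (nhds (ENNReal.ofReal (A ^ 2) * (eLpNorm g (ENNReal.ofReal p) volume) ^ 2)) := by
    refine ENNReal.Tendsto.const_mul ?_ (Or.inr ENNReal.ofReal_ne_top)
    exact ((ENNReal.continuous_pow 2).tendsto _).comp hL
  have hlimx : ∀ x, ‖oscOp α m g x‖ₑ ^ 2 =
      Filter.liminf (fun i => ‖oscOp α m (h i) x‖ₑ ^ 2) Filter.atTop := by
    intro x
    refine (Filter.Tendsto.liminf_eq ?_).symm
    exact ((ENNReal.continuous_pow 2).tendsto _).comp (hT x).enorm
  simp only [hlimx]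
  refine (lintegral_liminf_le ?_).trans ?_
  · intro i
    exact (osc_cont α m (h i).integrable).measurable.enorm.pow_const 2
  · rw [← hR.liminf_eq]
    refine Filter.liminf_le_liminf ?_
    exact Filter.Eventually.of_forall fun i => osc_schwartz hn α m p A hp (h i) (hA (h i))

lemma scale_exp (r : ℝ) (hr : 0 < r) (a m : ℕ) (hm : m ≠ 0) (w z : ℝ) :
    (r * w) ^ a * (r ^ (-(a : ℝ) / m) * z) ^ m = w ^ a * z ^ m := by
  have : (r ^ (-(a : ℝ) / m)) ^ m = (r ^ a)⁻¹ := by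
    rw [← Real.rpow_mul_natCast hr.le, div_mul_cancel₀ _ (by exact_mod_cast hm),
      Real.rpow_neg hr.le, Real.rpow_natCast]
  rw [mul_pow, mul_pow, this]
  field_simp

lemma rpow_bd (r : ℝ) (hr : 1 / 2 ≤ r) (hr2 : r ≤ 2) (a m : ℕ) (hm : m ≠ 0) :
    r ^ (-(a : ℝ) / m) ≤ 2 ^ a ∧ (r ^ (-(a : ℝ) / m))⁻¹ ≤ 2 ^ a := by
  have hr0 : 0 < r := by linarith
  have hm1 : (1 : ℝ) ≤ m := by exact_mod_cast Nat.one_le_iff_ne_zero.2 hm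
  have ht : (a : ℝ) / m ≤ a := div_le_self (by positivity) hm1
  have ht0 : (0 : ℝ) ≤ (a : ℝ) / m := by positivity
  have h2 : (2 : ℝ) ^ ((a : ℝ) / m) ≤ 2 ^ a := by
    rw [← Real.rpow_natCast]
    exact Real.rpow_le_rpow_of_exponent_le (by norm_num) ht
  rw [neg_div, Real.rpow_neg hr0.le, inv_inv]
  constructor
  · rw [← Real.inv_rpow hr0.le]
    refine (Real.rpow_le_rpow (by positivity) ?_ ht0).trans h2
    rw [inv_le_comm₀ hr0 (by norm_num)]
    linarith
  · exact (Real.rpow_le_rpow hr0.le hr2 ht0).trans h2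

lemma osc_scaled {n : ℕ} (hn : 2 ≤ n) (α : Fin n → ℕ) (m : ℕ) (hm : m ≠ 0) (p A : ℝ) (hp : 1 ≤ p)
    (hA : ∀ g : SchwartzMap (EuclideanSpace ℝ (Fin n)) ℂ,
      ∫ x in Metric.sphere (0 : EuclideanSpace ℝ (Fin n)) 1,
          ‖oscOp α m (⇑g) x‖ ^ 2 ∂(μH[(n : ℝ) - 1])
        ≤ A ^ 2 * (eLpNorm (⇑g) (ENNReal.ofReal p) volume).toReal ^ 2)
    (g : EuclideanSpace ℝ (Fin n) → ℂ) (hg : Measurable g)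
    (M : ℝ) (hM : ∀ y, ‖g y‖ ≤ M) (hc : HasCompactSupport g)
    (r : ℝ) (hr : 1 / 2 ≤ r) (hr2 : r ≤ 2) :
    ∫⁻ x in Metric.sphere (0 : EuclideanSpace ℝ (Fin n)) 1,
        ‖oscOp α m g (r • x)‖ₑ ^ 2 ∂(μH[(n : ℝ) - 1])
      ≤ ENNReal.ofReal (A ^ 2) * (ENNReal.ofReal (∏ j, (2 : ℝ) ^ α j) ^ 2 *
          eLpNorm g (ENNReal.ofReal p) volume) ^ 2 := by
  have hr0 : 0 < r := by linarith
  set d : Fin n → ℝ := fun j => r ^ (-(α j : ℝ) / m) with hd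
  have hdpos : ∀ j, 0 < d j := fun j => Real.rpow_pos_of_pos hr0 _
  set L : EuclideanSpace ℝ (Fin n) →ₗ[ℝ] EuclideanSpace ℝ (Fin n) :=
    Matrix.toEuclideanLin (Matrix.diagonal d) with hL
  have hLa : ∀ z j, L z j = d j * z j := by
    intro z j
    simp [hL, Matrix.toLpLin_apply, Matrix.mulVec_diagonal]
  have hdet : LinearMap.det L = ∏ j, d j := by
    rw [hL, Matrix.toEuclideanLin_eq_toLin, LinearMap.det_toLin, Matrix.det_diagonal]
  set c : ℝ := ∏ j, d j with hcdef
  have hcpos : 0 < c := Finset.prod_pos fun j _ => hdpos j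
  set B : ℝ := ∏ j, (2 : ℝ) ^ α j with hB
  have hB1 : 1 ≤ B := by
    rw [hB, Finset.prod_pow_eq_pow_sum]
    exact one_le_pow₀ (by norm_num)
  have hcB : c ≤ B := Finset.prod_le_prod (fun j _ => (hdpos j).le)
    fun j _ => (rpow_bd r hr hr2 (α j) m hm).1
  have hcB' : c⁻¹ ≤ B := by
    rw [hcdef, ← Finset.prod_inv_distrib]
    exact Finset.prod_le_prod (fun j _ => (inv_pos.2 (hdpos j)).le)
      fun j _ => (rpow_bd r hr hr2 (α j) m hm).2
  have hLc : Continuous L := L.continuous_of_finiteDimensional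
  have hmap : Measure.map L volume = ENNReal.ofReal c⁻¹ •
      (volume : Measure (EuclideanSpace ℝ (Fin n))) := by
    rw [Measure.map_linearMap_addHaar_eq_smul_addHaar _ (by rw [hdet]; exact hcpos.ne'), hdet,
      abs_of_pos (inv_pos.2 hcpos)]
  set G : EuclideanSpace ℝ (Fin n) → ℂ := fun z => (c : ℂ) * g (L z) with hG
  have hGm : Measurable G := (hg.comp hLc.measurable).const_mul _
  have hGM : ∀ y, ‖G y‖ ≤ c * M := by
    intro y
    rw [hG]
    simp only [norm_mul, Complex.norm_real, Real.norm_of_nonneg hcpos.le]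
    exact mul_le_mul_of_nonneg_left (hM _) hcpos.le
  have hGc : HasCompactSupport G := by
    have hinj : Function.Injective L := by
      intro x y hxy
      ext j
      have := congrArg (fun v : EuclideanSpace ℝ (Fin n) => v j) hxy
      simp only [hLa] at this
      exact mul_left_cancel₀ (hdpos j).ne' this
    have hemb : Topology.IsClosedEmbedding L := L.isClosedEmbedding_of_injective
      (LinearMap.ker_eq_bot.2 hinj)
    exact (hc.comp_isClosedEmbedding hemb).mul_left
  have hTG : ∀ x, oscOp α m g (r • x) = oscOp α m G x := by
    intro x
    unfold oscOp
    have h1 : ∀ z : EuclideanSpace ℝ (Fin n),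
        Complex.exp (Complex.I * Complex.ofReal (∑ j, (x j) ^ (α j) * (z j) ^ m)) * G z =
        (c : ℂ) * ((fun y => Complex.exp (Complex.I * Complex.ofReal
          (∑ j, ((r • x) j) ^ (α j) * (y j) ^ m)) * g y) (L z)) := by
      intro z
      have : ∑ j, ((r • x) j) ^ (α j) * (L z j) ^ m = ∑ j, (x j) ^ (α j) * (z j) ^ m := by
        refine Finset.sum_congr rfl fun j _ => ?_
        rw [hLa]
        exact scale_exp r hr0 (α j) m hm (x j) (z j)
      simp only [this, hG]
      ring
    have hmeas : Measurable (fun y => Complex.exp (Complex.I * Complex.ofReal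
          (∑ j, ((r • x) j) ^ (α j) * (y j) ^ m)) * g y) := by
      refine Measurable.mul ?_ hg
      exact ((osc_kernel_cont α m).comp
        (by fun_prop : Continuous fun y => (r • x, y))).measurable
    have h5 := integral_map (μ := volume) hLc.aemeasurable
      (f := fun y => Complex.exp (Complex.I * Complex.ofReal
          (∑ j, ((r • x) j) ^ (α j) * (y j) ^ m)) * g y) hmeas.aestronglyMeasurable
    rw [integral_congr_ae (Filter.Eventually.of_forall h1), integral_const_mul, ← h5, hmap,
      integral_smul_measure,
      ENNReal.toReal_ofReal (inv_pos.2 hcpos).le, Complex.real_smul, ← mul_assoc,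
      ← Complex.ofReal_mul, mul_inv_cancel₀ hcpos.ne', Complex.ofReal_one, one_mul]
  have hGn : eLpNorm G (ENNReal.ofReal p) volume ≤ ENNReal.ofReal B ^ 2 *
      eLpNorm g (ENNReal.ofReal p) volume := by
    have e1 : G = (c : ℂ) • (g ∘ L) := rfl
    rw [e1, eLpNorm_const_smul, ← eLpNorm_map_measure hg.aestronglyMeasurable hLc.aemeasurable,
      hmap, eLpNorm_smul_measure_of_ne_top ENNReal.ofReal_ne_top, smul_eq_mul, ← mul_assoc, sq]
    have hp0 : 0 < p := by linarith
    have hB1' : 1 ≤ ENNReal.ofReal B := by simpa using hB1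
    gcongr
    · rw [← ofReal_norm, Complex.norm_real, Real.norm_of_nonneg hcpos.le]
      exact ENNReal.ofReal_le_ofReal hcB
    · rw [one_div, ENNReal.toReal_inv, ENNReal.toReal_ofReal hp0.le, ← one_div p]
      calc ENNReal.ofReal c⁻¹ ^ (1 / p) ≤ ENNReal.ofReal B ^ (1 / p) := by gcongr
        _ ≤ ENNReal.ofReal B ^ (1 : ℝ) :=
          ENNReal.rpow_le_rpow_of_exponent_le hB1' (by rw [div_le_one hp0]; exact hp)
        _ = _ := ENNReal.rpow_one _
  simp only [hTG]
  refine (osc_ext hn α m p A hp hA G hGm (c * M) hGM hGc).trans ?_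
  gcongr

lemma radial_bound (k : ℕ) (δ : ℝ) (hδ : δ ^ 2 ≤ 1) :
    Measure.volumeIoiPow k {s : Set.Ioi (0:ℝ) | 1 - δ ^ 2 ≤ (s : ℝ) ∧ (s : ℝ) ≤ 1 + δ ^ 2} ≤
      2 ^ k * ENNReal.ofReal (2 * δ ^ 2) := by
  have hms : MeasurableSet {s : Set.Ioi (0:ℝ) | 1 - δ ^ 2 ≤ (s : ℝ) ∧ (s : ℝ) ≤ 1 + δ ^ 2} :=
    (measurableSet_le measurable_const measurable_subtype_coe).inter
      (measurableSet_le measurable_subtype_coe measurable_const)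
  rw [Measure.volumeIoiPow, withDensity_apply _ hms]
  calc _ ≤ ∫⁻ _ in {s : Set.Ioi (0:ℝ) | 1 - δ ^ 2 ≤ (s : ℝ) ∧ (s : ℝ) ≤ 1 + δ ^ 2}, 2 ^ k
        ∂(Measure.comap Subtype.val volume) := by
        refine setLIntegral_mono measurable_const fun s hs => ?_
        have h0 : (0 : ℝ) ≤ s := le_of_lt s.2
        rw [ENNReal.ofReal_pow h0]
        gcongr
        rw [ENNReal.ofReal_le_iff_le_toReal (by simp)]
        simp only [ENNReal.toReal_ofNat]
        linarith [hs.2]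
    _ = 2 ^ k * Measure.comap Subtype.val volume
        {s : Set.Ioi (0:ℝ) | 1 - δ ^ 2 ≤ (s : ℝ) ∧ (s : ℝ) ≤ 1 + δ ^ 2} := setLIntegral_const _ _
    _ ≤ _ := by
      gcongr
      rw [comap_subtype_coe_apply measurableSet_Ioi]
      calc _ ≤ volume (Set.Icc (1 - δ ^ 2) (1 + δ ^ 2)) := by
            refine measure_mono ?_
            rintro _ ⟨s, hs, rfl⟩
            exact hs
        _ = _ := by rw [Real.volume_Icc]; congr 1; ring

lemma shell_lintegral {n : ℕ} (hn : 2 ≤ n) (f : EuclideanSpace ℝ (Fin n) → ℝ≥0∞)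
    (hf : Measurable f) (C Q : ℝ≥0∞)
    (hC : (volume : Measure (EuclideanSpace ℝ (Fin n))).toSphere ≤ C • μH[(n : ℝ) - 1])
    (hQ : ∀ r : ℝ, 1 / 2 ≤ r → r ≤ 2 →
      ∫⁻ x in Metric.sphere (0 : EuclideanSpace ℝ (Fin n)) 1, f (r • x) ∂(μH[(n : ℝ) - 1]) ≤ Q)
    (δ : ℝ) (hδ : 0 < δ) (hδ2 : δ < 1 / 2) :
    ∫⁻ x in {x : EuclideanSpace ℝ (Fin n) | 1 - δ ^ 2 ≤ ‖x‖ ∧ ‖x‖ ≤ 1 + δ ^ 2}, f x ≤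
      C * Q * (2 ^ (n - 1) * ENNReal.ofReal (2 * δ ^ 2)) := by
  have hd4 : δ ^ 2 ≤ 1 / 4 := by nlinarith
  set S := {x : EuclideanSpace ℝ (Fin n) | 1 - δ ^ 2 ≤ ‖x‖ ∧ ‖x‖ ≤ 1 + δ ^ 2} with hS
  have hSm : MeasurableSet S :=
    (measurableSet_le measurable_const measurable_norm).inter
      (measurableSet_le measurable_norm measurable_const)
  set F := S.indicator f with hF
  have hFm : Measurable F := hf.indicator hSm
  have hnt : Nontrivial (EuclideanSpace ℝ (Fin n)) := by
    have : Nonempty (Fin n) := ⟨⟨0, by omega⟩⟩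
    infer_instance
  have hfr : Module.finrank ℝ (EuclideanSpace ℝ (Fin n)) = n := by simp
  rw [← lintegral_indicator hSm]
  have h1 : ∫⁻ x, F x = ∫⁻ x : ({0}ᶜ : Set (EuclideanSpace ℝ (Fin n))), F x
      ∂(Measure.comap Subtype.val volume) := by
    rw [lintegral_subtype_comap (measurableSet_singleton _).compl, restrict_compl_singleton]
  have hGm : Measurable (fun q : Metric.sphere (0 : EuclideanSpace ℝ (Fin n)) 1 × Set.Ioi (0:ℝ) =>
      F ((q.2 : ℝ) • (q.1 : EuclideanSpace ℝ (Fin n)))) := by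
    refine hFm.comp (Continuous.measurable ?_)
    fun_prop
  have h2 := (Measure.measurePreserving_homeomorphUnitSphereProd
    (volume : Measure (EuclideanSpace ℝ (Fin n)))).lintegral_comp hGm
  have h3 : ∀ x : ({0}ᶜ : Set (EuclideanSpace ℝ (Fin n))),
      (((homeomorphUnitSphereProd (EuclideanSpace ℝ (Fin n)) x).2 : ℝ) •
        ((homeomorphUnitSphereProd (EuclideanSpace ℝ (Fin n)) x).1 : EuclideanSpace ℝ (Fin n))) =
        (x : EuclideanSpace ℝ (Fin n)) := by
    intro x
    have hx : ‖(x : EuclideanSpace ℝ (Fin n))‖ ≠ 0 := norm_ne_zero_iff.2 x.2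
    simp [smul_smul, hx]
  simp only [h3] at h2
  rw [h1, h2, hfr, lintegral_prod_symm _ hGm.aemeasurable]
  set I := {s : Set.Ioi (0:ℝ) | 1 - δ ^ 2 ≤ (s : ℝ) ∧ (s : ℝ) ≤ 1 + δ ^ 2} with hI
  have hIm : MeasurableSet I :=
    (measurableSet_le measurable_const measurable_subtype_coe).inter
      (measurableSet_le measurable_subtype_coe measurable_const)
  calc _ ≤ ∫⁻ s : Set.Ioi (0:ℝ), I.indicator (fun _ => C * Q) s ∂(Measure.volumeIoiPow (n - 1)) := by
        refine lintegral_mono fun s => ?_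
        have hs0 : (0:ℝ) < s := s.2
        have hnorm : ∀ w : Metric.sphere (0 : EuclideanSpace ℝ (Fin n)) 1,
            ‖(s : ℝ) • (w : EuclideanSpace ℝ (Fin n))‖ = s := by
          intro w
          rw [norm_smul, norm_eq_of_mem_sphere w, mul_one, Real.norm_of_nonneg hs0.le]
        by_cases hs : s ∈ I
        · rw [Set.indicator_of_mem hs]
          calc _ ≤ ∫⁻ w : Metric.sphere (0 : EuclideanSpace ℝ (Fin n)) 1,
                F ((s : ℝ) • (w : EuclideanSpace ℝ (Fin n))) ∂(C • μH[(n : ℝ) - 1]) :=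
                lintegral_mono' hC le_rfl
            _ ≤ ∫⁻ w : Metric.sphere (0 : EuclideanSpace ℝ (Fin n)) 1,
                f ((s : ℝ) • (w : EuclideanSpace ℝ (Fin n))) ∂(C • μH[(n : ℝ) - 1]) :=
                lintegral_mono fun w => Set.indicator_le_self _ _ _
            _ = C * ∫⁻ w : Metric.sphere (0 : EuclideanSpace ℝ (Fin n)) 1,
                f ((s : ℝ) • (w : EuclideanSpace ℝ (Fin n))) ∂(μH[(n : ℝ) - 1]) := by
                rw [lintegral_smul_measure, smul_eq_mul]
            _ ≤ C * Q := by
                gcongr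
                refine le_trans (le_of_eq ?_) (hQ s (by linarith [hs.1]) (by linarith [hs.2]))
                have hiso : Isometry (Subtype.val : Metric.sphere (0 : EuclideanSpace ℝ (Fin n)) 1 → _) :=
                  isometry_subtype_coe
                have hn1 : (0:ℝ) ≤ (n:ℝ) - 1 := by
                  have : (2:ℝ) ≤ n := by exact_mod_cast hn
                  linarith
                have hmp := hiso.map_hausdorffMeasure (d := (n:ℝ) - 1) (Or.inl hn1)
                rw [Subtype.range_coe] at hmp
                have hmm : Measurable (fun x : EuclideanSpace ℝ (Fin n) => f ((s:ℝ) • x)) :=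
                  hf.comp (measurable_const_smul (s:ℝ))
                exact (lintegral_map hmm hiso.continuous.measurable).symm.trans (by rw [hmp])
        · rw [Set.indicator_of_notMem hs]
          refine le_of_eq ?_
          refine (lintegral_congr (g := fun _ => 0) fun w => ?_).trans lintegral_zero
          refine Set.indicator_of_notMem ?_ _
          rw [hS, Set.mem_ofPred_eq, hnorm]
          exact hs
    _ = C * Q * Measure.volumeIoiPow (n - 1) I := by
        rw [lintegral_indicator hIm, setLIntegral_const]
    _ ≤ _ := by
        gcongr
        exact radial_bound (n - 1) δ (by linarith)

/-- Transfer of the restriction estimate from the sphere to a thin shell: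
if `∫_{𝕊^{n-1}} |T g|² dσ ≤ A² ‖g‖_p²` for all Schwartz `g`, then for all sufficiently
small `δ ∈ (0, 1/2)` and all bounded compactly supported measurable `g`,
`∫_{1-δ² ≤ |x| ≤ 1+δ²} |T g|² dx ≤ A' δ² ‖g‖_p²`. -/
theorem sphere_to_shell_transfer (n : ℕ) (hn : 2 ≤ n) (α : Fin n → ℕ)
    (hα : ∀ j, 3 ≤ α j) (m : ℕ) (hm : 3 ≤ m) (p : ℝ) (hp1 : 1 ≤ p) (A : ℝ)
    (hA : ∀ g : SchwartzMap (EuclideanSpace ℝ (Fin n)) ℂ,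
      ∫ x in Metric.sphere (0 : EuclideanSpace ℝ (Fin n)) 1,
          ‖oscOp α m (⇑g) x‖ ^ 2 ∂(μH[(n : ℝ) - 1])
        ≤ A ^ 2 * (eLpNorm (⇑g) (ENNReal.ofReal p) volume).toReal ^ 2) :
    ∃ A' : ℝ, ∃ δ₀ : ℝ, 0 < δ₀ ∧ ∀ δ : ℝ, 0 < δ → δ < δ₀ → δ < 1 / 2 →
      ∀ g : EuclideanSpace ℝ (Fin n) → ℂ, Measurable g → (∃ M : ℝ, ∀ y, ‖g y‖ ≤ M) →
        HasCompactSupport g →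
        ∫ x in {x : EuclideanSpace ℝ (Fin n) | 1 - δ ^ 2 ≤ ‖x‖ ∧ ‖x‖ ≤ 1 + δ ^ 2},
            ‖oscOp α m g x‖ ^ 2
          ≤ A' * δ ^ 2 * (eLpNorm g (ENNReal.ofReal p) volume).toReal ^ 2 := by
  obtain ⟨C, -, hCt, hC⟩ := toSphere_le hn
  set B := ∏ j, (2 : ℝ) ^ α j with hB
  have hB0 : 0 ≤ B := Finset.prod_nonneg fun j _ => by positivity
  refine ⟨C.toReal * (A ^ 2 * (B ^ 2) ^ 2) * (2 ^ (n - 1) * 2), 1, one_pos, ?_⟩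
  rintro δ hδ - hδ2 g hg ⟨M, hM⟩ hc
  have hgi : Integrable g := by
    have : IntegrableOn g (tsupport g) :=
      Measure.integrableOn_of_bounded (M := M) hc.measure_lt_top.ne hg.aestronglyMeasurable
        (Filter.Eventually.of_forall hM)
    exact (integrableOn_iff_integrable_of_support_subset (subset_tsupport g)).1 this
  have hgp : eLpNorm g (ENNReal.ofReal p) volume ≠ ∞ := by
    have h1 : MemLp g (ENNReal.ofReal p) volume := by
      have : MemLp g ∞ volume := memLp_top_of_bound hg.aestronglyMeasurable M
        (Filter.Eventually.of_forall hM)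
      exact this.mono_exponent_of_measure_support_ne_top (s := tsupport g)
        (fun x hx => image_eq_zero_of_notMem_tsupport hx) hc.measure_lt_top.ne le_top
    exact h1.2.ne
  have key := shell_lintegral hn (fun x => ‖oscOp α m g x‖ₑ ^ 2)
    ((osc_cont α m hgi).measurable.enorm.pow_const 2) C _ hC
    (fun r hr hr2 => osc_scaled hn α m (by omega) p A hp1 hA g hg M hM hc r hr hr2) δ hδ hδ2
  have h2 : ∀ x, ENNReal.ofReal ‖‖oscOp α m g x‖ ^ 2‖ = ‖oscOp α m g x‖ₑ ^ 2 := by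
    intro x
    rw [Real.norm_of_nonneg (by positivity), ENNReal.ofReal_pow (norm_nonneg _), ofReal_norm]
  refine (le_abs_self _).trans ?_
  rw [← Real.norm_eq_abs]
  refine (norm_integral_le_lintegral_norm _).trans ?_
  simp only [h2]
  refine (ENNReal.toReal_mono ?_ key).trans (le_of_eq ?_)
  · finiteness
  · rw [← hB]
    simp only [ENNReal.toReal_mul, ENNReal.toReal_pow, ENNReal.toReal_ofReal hB0,
      ENNReal.toReal_ofReal (by positivity : (0:ℝ) ≤ A ^ 2),
      ENNReal.toReal_ofReal (by positivity : (0:ℝ) ≤ 2 * δ ^ 2), ENNReal.toReal_ofNat]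
    ring
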